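/- Let −1/2 ≤ m < 0 and ω_j := √(j⁴ + m j²) for integers j ≥ 1. Then for all integers i, j, k with 2 ≤ i ≤ j < k, one has |ω_i + ω_j − ω_k| ≥ 0.49·|m|. -/

import Mathlib

/-!
The Taylor expansion of the square root gives `ω_j ≈ j² + m/2`, with an error of order `m²/j²`.
Hence `ω_i + ω_j - ω_k ≈ (i² + j² - k²) + m/2`, where `i² + j² - k²` is an integer. If this integer
is `≤ 0`, both terms have the same sign and the value is at most `0.49 m`; if it is `≥ 1`, it
dominates since `|m| ≤ 1/2`. The required error bounds are `ω_j ≤ j² + m/2`, together with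
`ω_j ≥ j² + 0.55 m` for `j ≥ 2` and the sharper `ω_k ≥ k² + 0.51 m` for `k ≥ 3`.
-/

/-- Linear frequencies `ω_j = √(j⁴ + m j²)` of the hinged beam. -/
noncomputable def beamOmega (m : ℝ) (j : ℕ) : ℝ :=
  Real.sqrt ((j : ℝ) ^ 4 + m * (j : ℝ) ^ 2)

theorem beamOmega_le (m : ℝ) (hm0 : -(1/2) ≤ m) (j : ℕ) (hj : 2 ≤ j) :
    beamOmega m j ≤ (j : ℝ) ^ 2 + m / 2 := by
  have h : (2 : ℝ) ≤ j := by exact_mod_cast hj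
  refine Real.sqrt_le_iff.mpr ⟨by nlinarith, ?_⟩
  nlinarith [sq_nonneg m]

theorem le_beamOmega_of_two_le (m : ℝ) (hm0 : -(1/2) ≤ m) (hm1 : m < 0) (j : ℕ) (hj : 2 ≤ j) :
    (j : ℝ) ^ 2 + 0.55 * m ≤ beamOmega m j := by
  have h : (2 : ℝ) ≤ j := by exact_mod_cast hj
  have h4 : (4 : ℝ) ≤ (j : ℝ) ^ 2 := by nlinarith
  apply Real.le_sqrt_of_sq_le
  have h5 : 0 ≤ (-m) * (0.1 * (j : ℝ) ^ 2 + 0.3025 * m) :=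
    mul_nonneg (by linarith) (by linarith)
  linarith

theorem le_beamOmega_of_three_le (m : ℝ) (hm0 : -(1/2) ≤ m) (hm1 : m < 0) (k : ℕ) (hk : 3 ≤ k) :
    (k : ℝ) ^ 2 + 0.51 * m ≤ beamOmega m k := by
  have h : (3 : ℝ) ≤ k := by exact_mod_cast hk
  have h9 : (9 : ℝ) ≤ (k : ℝ) ^ 2 := by nlinarith
  apply Real.le_sqrt_of_sq_le
  have h5 : 0 ≤ (-m) * (0.02 * (k : ℝ) ^ 2 + 0.2601 * m) :=
    mul_nonneg (by linarith) (by linarith)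
  linarith

/-- Lower bound `|ω_i + ω_j - ω_k| ≥ 0.49·|m|` for `2 ≤ i ≤ j < k` and `-1/2 ≤ m < 0`. -/
theorem beam_sixth_order_nonresonance_neg
    (m : ℝ) (hm0 : -(1/2) ≤ m) (hm1 : m < 0)
    (i j k : ℕ) (hi : 2 ≤ i) (hij : i ≤ j) (hjk : j < k) :
    0.49 * |m| ≤ |beamOmega m i + beamOmega m j - beamOmega m k| := by
  rw [abs_of_neg hm1]
  rcases Nat.lt_or_ge (k ^ 2) (i ^ 2 + j ^ 2) with h | h
  · have h1 : (k : ℝ) ^ 2 + 1 ≤ (i : ℝ) ^ 2 + (j : ℝ) ^ 2 := by exact_mod_cast h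
    have hi' := le_beamOmega_of_two_le m hm0 hm1 i hi
    have hj' := le_beamOmega_of_two_le m hm0 hm1 j (by omega)
    have hk' := beamOmega_le m hm0 k (by omega)
    exact le_trans (by linarith) (le_abs_self _)
  · have h1 : (i : ℝ) ^ 2 + (j : ℝ) ^ 2 ≤ (k : ℝ) ^ 2 := by exact_mod_cast h
    have hi' := beamOmega_le m hm0 i hi
    have hj' := beamOmega_le m hm0 j (by omega)
    have hk' := le_beamOmega_of_three_le m hm0 hm1 k (by omega)
    exact le_trans (by linarith) (neg_le_abs _)
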